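/- Let p ≥ 1 be an integer and let s be a real number with s > 2p. Then ∫₀^∞ x^{s−1}/(cosh x − cos x)^p dx = 2^p Γ(s) ζ_{2p}(s, p | (1+i,1−i)^p) and ∫₀^∞ x^{s−1}/(cosh x + cos x)^p dx = 2^p Γ(s) ζ̃_{2p}(s, p | (1+i,1−i)^p). -/

import Mathlib

/-!
With `ε = ±1`, the factorisation
`cosh x - ε cos x = (e ^ x / 2) (1 - ε e ^ (-(1+i)x)) (1 - ε e ^ (-(1-i)x))` turns
`(cosh x - ε cos x) ^ (-p)` into `2 ^ p e ^ (-px)` times a product of `2p` geometric series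
(`integrand_expansion`), i.e. a series of exponentials `e ^ (-r x)` over pairs of multi-indices, where
`r = p + (1+i) ∑ n_j + (1-i) ∑ m_j`. Multiplying by `x ^ (s - 1)` and integrating term by term gives
`Γ(s) r ^ (-s)` for each term.

Two facts carry this. The Gamma integral `∫ x ^ (s-1) e ^ (-r x) dx = Γ(s) r ^ (-s)` is needed for
complex `r` with positive real part; it follows from the real case by analytic continuation in `r`
(`integral_gammaKernel`). The interchange of sum and integral needs
`∑ (p + ∑ n_j + ∑ m_j) ^ (-s) < ∞`, which is where `s > 2p` enters (`summable_barnes_majorant`).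
-/

open MeasureTheory Real

/-- The Barnes zeta function `ζ_{2p}(s, p | (1+i,1−i)^p)` with the parameters `1+i` and `1−i`
each repeated `p` times. -/
noncomputable def barnesZetaRep (p : ℕ) (s : ℂ) : ℂ :=
  ∑' nm : (Fin p → ℕ) × (Fin p → ℕ),
    ((p : ℂ) + (1 + Complex.I) * ∑ j, (nm.1 j : ℂ)
      + (1 - Complex.I) * ∑ j, (nm.2 j : ℂ)) ^ (-s)

/-- The alternating Barnes zeta function `ζ̃_{2p}(s, p | (1+i,1−i)^p)`. -/
noncomputable def barnesZetaRepAlt (p : ℕ) (s : ℂ) : ℂ :=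
  ∑' nm : (Fin p → ℕ) × (Fin p → ℕ),
    (-1 : ℂ) ^ (∑ j, nm.1 j + ∑ j, nm.2 j) *
      ((p : ℂ) + (1 + Complex.I) * ∑ j, (nm.1 j : ℂ)
        + (1 - Complex.I) * ∑ j, (nm.2 j : ℂ)) ^ (-s)

/-- The `p`-th power of an absolutely convergent series, expanded over multi-indices `Fin p → ℕ`. -/
theorem hasSum_prod_pi {𝕜 : Type*} [NormedField 𝕜] [CompleteSpace 𝕜] {f : ℕ → 𝕜}
    (hf : Summable fun n => ‖f n‖) (p : ℕ) :
    (Summable fun n : Fin p → ℕ => ‖∏ j, f (n j)‖) ∧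
      HasSum (fun n : Fin p → ℕ => ∏ j, f (n j)) ((∑' n, f n) ^ p) := by
  induction p with
  | zero => exact ⟨(hasSum_fintype _).summable, by simp⟩
  | succ p ih =>
    have hs : Summable fun x : ℕ × (Fin p → ℕ) => ‖f x.1 * ∏ j, f (x.2 j)‖ :=
      Summable.mul_norm (f := f) (g := fun n : Fin p → ℕ => ∏ j, f (n j)) hf ih.1
    have hv : HasSum (fun x : ℕ × (Fin p → ℕ) => f x.1 * ∏ j, f (x.2 j))
        ((∑' n, f n) ^ (p + 1)) := by
      rw [pow_succ']
      exact HasSum.mul (f := f) (g := fun n : Fin p → ℕ => ∏ j, f (n j)) hf.of_norm.hasSum ih.2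
        hs.of_norm
    constructor
    · refine (Equiv.summable_iff (Fin.consEquiv fun _ : Fin (p + 1) => ℕ)).1 (hs.congr fun x => ?_)
      simp [Fin.consEquiv, Fin.prod_univ_succ]
    · refine (Equiv.hasSum_iff (Fin.consEquiv fun _ : Fin (p + 1) => ℕ)).1 ?_
      convert hv using 2 with x
      simp [Fin.consEquiv, Fin.prod_univ_succ]

/-- Convergence of the Barnes series in the range `2p < s`. Each of the `2p` numbers `n_j + 1`,
`m_j + 1` is at most `R = p + ∑ n_j + ∑ m_j`, so `R ^ (-s)` is bounded by the product of the
`2p` factors `(n_j + 1) ^ (-s / 2p)`, `(m_j + 1) ^ (-s / 2p)`, whose exponent exceeds `1` in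
absolute value. -/
theorem summable_barnes_majorant (p : ℕ) (hp : 1 ≤ p) (s : ℝ) (hs : 2 * (p : ℝ) < s) :
    Summable fun nm : (Fin p → ℕ) × (Fin p → ℕ) =>
      ((p : ℝ) + ∑ j, (nm.1 j : ℝ) + ∑ j, (nm.2 j : ℝ)) ^ (-s) := by
  have hp' : (1 : ℝ) ≤ p := by exact_mod_cast hp
  set t : ℝ := s / (2 * p) with ht
  have ht1 : 1 < t := by rw [ht, lt_div_iff₀ (by linarith)]; linarith
  have hst : s = t * p + t * p := by rw [ht]; field_simp; ring
  let f : ℕ → ℝ := fun n => ((n : ℝ) + 1) ^ (-t)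
  have hf : Summable fun n => ‖f n‖ := by
    have h := (summable_nat_add_iff 1).2 (Real.summable_nat_rpow (p := -t) |>.2 (by linarith))
    refine h.congr fun n => ?_
    rw [Real.norm_of_nonneg (by positivity)]
    simp [f]
  have hsum := (hasSum_prod_pi hf p).1.mul_norm (hasSum_prod_pi hf p).1
  refine hsum.of_nonneg_of_le (fun nm => by positivity) fun nm => ?_
  set R : ℝ := (p : ℝ) + ∑ j, (nm.1 j : ℝ) + ∑ j, (nm.2 j : ℝ) with hR
  have h1 : 0 ≤ ∑ j, (nm.1 j : ℝ) := by positivity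
  have h2 : 0 ≤ ∑ j, (nm.2 j : ℝ) := by positivity
  have hR0 : 0 < R := by linarith
  have key : ∀ g : Fin p → ℕ, (∀ j, (g j : ℝ) + 1 ≤ R) → R ^ (-(t * p)) ≤ ∏ j, f (g j) := by
    intro g hg
    calc R ^ (-(t * p)) = ∏ _j : Fin p, R ^ (-t) := by
          rw [Finset.prod_const, Finset.card_univ, Fintype.card_fin, ← Real.rpow_natCast,
            ← Real.rpow_mul hR0.le, neg_mul]
      _ ≤ _ := Finset.prod_le_prod (fun _ _ => by positivity) fun j _ =>
          Real.rpow_le_rpow_of_nonpos (by positivity) (hg j) (by linarith)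
  have k1 := key nm.1 fun j => by
    have := Finset.single_le_sum (f := fun j => (nm.1 j : ℝ)) (fun _ _ => by positivity)
      (Finset.mem_univ j)
    linarith
  have k2 := key nm.2 fun j => by
    have := Finset.single_le_sum (f := fun j => (nm.2 j : ℝ)) (fun _ _ => by positivity)
      (Finset.mem_univ j)
    linarith
  rw [hst, neg_add, Real.rpow_add hR0]
  refine (mul_le_mul k1 k2 (by positivity) (le_trans (by positivity) k1)).trans (le_abs_self _)

theorem norm_gammaKernel (s : ℝ) (r : ℂ) {x : ℝ} (hx : 0 < x) :
    ‖((x ^ s : ℝ) : ℂ) * Complex.exp (-(r * x))‖ = x ^ s * Real.exp (-(r.re * x)) := by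
  rw [norm_mul, Complex.norm_exp, Complex.norm_real, Real.norm_of_nonneg (by positivity)]
  simp

theorem integrable_real_gammaKernel {s b : ℝ} (hs : -1 < s) (hb : 0 < b) :
    IntegrableOn (fun x : ℝ => x ^ s * Real.exp (-(b * x))) (Set.Ioi 0) := by
  simpa using integrableOn_rpow_mul_exp_neg_mul_rpow (p := 1) hs one_pos hb

theorem measurable_gammaKernel (s : ℝ) (r : ℂ) :
    Measurable fun x : ℝ => ((x ^ s : ℝ) : ℂ) * Complex.exp (-(r * x)) := by
  fun_prop

theorem integrable_gammaKernel {s : ℝ} (hs : -1 < s) {r : ℂ} (hr : 0 < r.re) :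
    IntegrableOn (fun x : ℝ => ((x ^ s : ℝ) : ℂ) * Complex.exp (-(r * x))) (Set.Ioi 0) := by
  refine (integrable_real_gammaKernel hs hr).mono'
    (measurable_gammaKernel s r).aestronglyMeasurable ?_
  filter_upwards [ae_restrict_mem measurableSet_Ioi] with x hx
  exact (norm_gammaKernel s r hx).le

/-- The Laplace transform of `x ^ (s - 1)` is holomorphic in the right half-plane: near `r₀` the
`r`-derivative of the integrand is dominated by `x ^ s * exp (-(re r₀ / 2) * x)`. -/
theorem differentiableOn_gammaTransform {s : ℝ} (hs : 0 < s) :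
    DifferentiableOn ℂ (fun r : ℂ =>
      ∫ x in Set.Ioi (0 : ℝ), ((x ^ (s - 1) : ℝ) : ℂ) * Complex.exp (-(r * x)))
      {r | 0 < r.re} := by
  intro r₀ (hr₀ : 0 < r₀.re)
  have hopen : {r : ℂ | r₀.re / 2 < r.re} ∈ nhds r₀ :=
    (isOpen_lt continuous_const Complex.continuous_re).mem_nhds (by simp; linarith)
  have := (hasDerivAt_integral_of_dominated_loc_of_deriv_le
    (μ := volume.restrict (Set.Ioi (0 : ℝ)))
    (F := fun (r : ℂ) (x : ℝ) => ((x ^ (s - 1) : ℝ) : ℂ) * Complex.exp (-(r * x)))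
    (F' := fun (r : ℂ) (x : ℝ) =>
      ((x ^ (s - 1) : ℝ) : ℂ) * (Complex.exp (-(r * x)) * (-x)))
    (bound := fun x => x ^ s * Real.exp (-(r₀.re / 2 * x))) (x₀ := r₀) hopen
    (Filter.Eventually.of_forall fun r => (measurable_gammaKernel _ r).aestronglyMeasurable)
    (integrable_gammaKernel (by linarith) hr₀)
    (Measurable.aestronglyMeasurable (by fun_prop)) ?_
    (integrable_real_gammaKernel (by linarith) (by linarith)) ?_).2
  · exact this.differentiableAt.differentiableWithinAt
  · filter_upwards [ae_restrict_mem measurableSet_Ioi] with x hx r hr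
    have hx : 0 < x := hx
    rw [← mul_assoc, norm_mul, norm_gammaKernel _ _ hx, norm_neg, Complex.norm_real,
      Real.norm_of_nonneg hx.le, mul_right_comm, ← Real.rpow_add_one hx.ne', sub_add_cancel]
    have hr : r₀.re / 2 < r.re := hr
    gcongr
  · refine Filter.Eventually.of_forall fun x r _ => ?_
    have h : HasDerivAt (fun r : ℂ => -(r * x)) (-(x : ℂ)) r := by
      simpa using! ((hasDerivAt_id r).mul_const (x : ℂ)).neg
    exact h.cexp.const_mul _

/-- The Gamma integral with a complex rate `r` in the right half-plane, obtained from the case of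
real `r` by the identity theorem. -/
theorem integral_gammaKernel {s : ℝ} (hs : 0 < s) {r : ℂ} (hr : 0 < r.re) :
    ∫ x in Set.Ioi (0 : ℝ), ((x ^ (s - 1) : ℝ) : ℂ) * Complex.exp (-(r * x)) =
      r ^ (-(s : ℂ)) * Complex.Gamma s := by
  have hopen : IsOpen {r : ℂ | 0 < r.re} := isOpen_lt continuous_const Complex.continuous_re
  have hg : DifferentiableOn ℂ (fun r : ℂ => r ^ (-(s : ℂ)) * Complex.Gamma s)
      {r | 0 < r.re} := fun r hr =>
    ((differentiableAt_id.cpow_const (Or.inl hr)).mul_const _).differentiableWithinAt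
  have hreal : ∀ r : ℝ, 0 < r →
      ∫ x in Set.Ioi (0 : ℝ), ((x ^ (s - 1) : ℝ) : ℂ) * Complex.exp (-((r : ℂ) * x)) =
      (r : ℂ) ^ (-(s : ℂ)) * Complex.Gamma s := by
    intro r hr
    have h := Real.integral_rpow_mul_exp_neg_mul_Ioi hs hr
    rw [one_div, Real.inv_rpow hr.le, ← Real.rpow_neg hr.le] at h
    rw [Complex.Gamma_ofReal, ← Complex.ofReal_neg, ← Complex.ofReal_cpow hr.le,
      ← Complex.ofReal_mul, ← h, ← integral_complex_ofReal]
    simp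
  refine (differentiableOn_gammaTransform hs |>.analyticOnNhd hopen)
    |>.eqOn_of_preconnected_of_frequently_eq (hg.analyticOnNhd hopen)
      (convex_halfSpace_re_gt 0).isPreconnected (z₀ := ((1 : ℝ) : ℂ)) (by simp) ?_ hr
  have ht : Filter.Tendsto (fun x : ℝ => (x : ℂ)) (nhdsWithin 1 {1}ᶜ)
      (nhdsWithin ((1 : ℝ) : ℂ) {((1 : ℝ) : ℂ)}ᶜ) :=
    Complex.continuous_ofReal.continuousAt.continuousWithinAt.tendsto_nhdsWithin
      fun x hx => by simpa using hx
  refine ht.frequently (Filter.Eventually.frequently ?_)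
  filter_upwards [mem_nhdsWithin_of_mem_nhds (lt_mem_nhds one_pos)] with x hx
  exact hreal x hx

/-- The base `p + (1+i)(n₁+⋯+n_p) + (1−i)(m₁+⋯+m_p)` of the term of the Barnes series indexed by
the pair of multi-indices `nm = (n, m)`. -/
noncomputable def barnesForm (p : ℕ) (nm : (Fin p → ℕ) × (Fin p → ℕ)) : ℂ :=
  (p : ℂ) + (1 + Complex.I) * ∑ j, (nm.1 j : ℂ) + (1 - Complex.I) * ∑ j, (nm.2 j : ℂ)

theorem barnesForm_re (p : ℕ) (nm : (Fin p → ℕ) × (Fin p → ℕ)) :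
    (barnesForm p nm).re = (p : ℝ) + ∑ j, (nm.1 j : ℝ) + ∑ j, (nm.2 j : ℝ) := by
  simp [barnesForm]

theorem hasSum_geometric_pi {z : ℂ} (hz : ‖z‖ < 1) (p : ℕ) :
    (Summable fun n : Fin p → ℕ => ‖z ^ ∑ j, n j‖) ∧
      HasSum (fun n : Fin p → ℕ => z ^ ∑ j, n j) ((1 - z)⁻¹ ^ p) := by
  have := hasSum_prod_pi (f := fun n => z ^ n)
    (by simpa using summable_geometric_of_lt_one (norm_nonneg z) hz) p
  simpa [Finset.prod_pow_eq_pow_sum, tsum_geometric_of_norm_lt_one hz] using this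

/-- Termwise form of the integrand: since
`cosh x - ε cos x = (e ^ x / 2) (1 - ε e ^ (-(1+i)x)) (1 - ε e ^ (-(1-i)x))` for `ε = ±1`, the
inverse `p`-th power is a product of `2p` geometric series. -/
theorem integrand_expansion (p : ℕ) {ε : ℝ} (hε : ε = 1 ∨ ε = -1) {x : ℝ} (hx : 0 < x) :
    HasSum (fun nm : (Fin p → ℕ) × (Fin p → ℕ) =>
      (ε : ℂ) ^ (∑ j, nm.1 j + ∑ j, nm.2 j) * Complex.exp (-(barnesForm p nm * x)))
      (((2 ^ p)⁻¹ * (1 / (Real.cosh x - ε * Real.cos x) ^ p) : ℝ) : ℂ) := by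
  set z : ℂ := ε * Complex.exp (-((1 + Complex.I) * x)) with hz
  set w : ℂ := ε * Complex.exp (-((1 - Complex.I) * x)) with hw
  have hεn : ‖(ε : ℂ)‖ = 1 := by rcases hε with rfl | rfl <;> simp
  have hz1 : ‖z‖ < 1 := by
    rw [hz, norm_mul, hεn, Complex.norm_exp]; simpa using hx
  have hw1 : ‖w‖ < 1 := by
    rw [hw, norm_mul, hεn, Complex.norm_exp]; simpa using hx
  have hzz := hasSum_geometric_pi hz1 p
  have hww := hasSum_geometric_pi hw1 p
  have h := (hzz.2.mul hww.2 (hzz.1.mul_norm hww.1).of_norm).mul_left (Complex.exp (-(p * x)))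
  have hfac : (1 - z) * (1 - w) =
      2 * Complex.exp (-x) * ((Real.cosh x - ε * Real.cos x : ℝ) : ℂ) := by
    have e1 : Complex.exp (-((1 + Complex.I) * x)) =
        Complex.exp (-x) * Complex.exp (-x * Complex.I) := by
      rw [← Complex.exp_add]; congr 1; ring
    have e2 : Complex.exp (-((1 - Complex.I) * x)) =
        Complex.exp (-x) * Complex.exp (x * Complex.I) := by
      rw [← Complex.exp_add]; congr 1; ring
    have e3 : Complex.exp (-x * Complex.I) * Complex.exp (x * Complex.I) = 1 := by
      rw [← Complex.exp_add]; simp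
    have e4 : Complex.exp (-x) * Complex.exp x = 1 := by
      rw [← Complex.exp_add]; simp
    have hε2 : (ε : ℂ) ^ 2 = 1 := by rcases hε with rfl | rfl <;> simp
    rw [hz, hw, e1, e2]
    push_cast
    rw [Complex.cosh, Complex.cos]
    linear_combination (Complex.exp (-x) ^ 2 * Complex.exp (-x * Complex.I) *
      Complex.exp (x * Complex.I)) * hε2 + Complex.exp (-x) ^ 2 * e3 - e4
  convert! h using 1
  · funext nm
    rw [hz, hw, mul_pow, mul_pow, ← Complex.exp_nat_mul, ← Complex.exp_nat_mul, pow_add]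
    have : Complex.exp (-(barnesForm p nm * x)) = Complex.exp (-(p * x)) *
        (Complex.exp ((∑ j, nm.1 j : ℕ) * -((1 + Complex.I) * x)) *
          Complex.exp ((∑ j, nm.2 j : ℕ) * -((1 - Complex.I) * x))) := by
      rw [← Complex.exp_add, ← Complex.exp_add, barnesForm]
      congr 1
      push_cast
      ring
    rw [this]
    ring
  · rw [← mul_pow, ← mul_inv, hfac]
    have e5 : Complex.exp (-(p * x)) = Complex.exp (-x) ^ p := by
      rw [← Complex.exp_nat_mul]; congr 1; ring
    rw [e5, ← mul_pow]
    push_cast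
    rw [mul_inv, mul_inv, mul_comm (2 : ℂ)⁻¹, mul_assoc,
      mul_inv_cancel_left₀ (Complex.exp_ne_zero _), mul_pow, inv_pow, inv_pow, one_div]

/-- Both evaluations at once: `ε = 1` is the plain Barnes series, `ε = -1` the alternating one. -/
theorem berndt_signed (p : ℕ) (hp : 1 ≤ p) (s : ℝ) (hs : 2 * (p : ℝ) < s) {ε : ℝ}
    (hε : ε = 1 ∨ ε = -1) :
    ((∫ x in Set.Ioi (0 : ℝ), x ^ (s - 1) / (Real.cosh x - ε * Real.cos x) ^ p : ℝ) : ℂ) =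
      (2 : ℂ) ^ p * Complex.Gamma s * ∑' nm : (Fin p → ℕ) × (Fin p → ℕ),
        (ε : ℂ) ^ (∑ j, nm.1 j + ∑ j, nm.2 j) * barnesForm p nm ^ (-(s : ℂ)) := by
  have hp' : (1 : ℝ) ≤ p := by exact_mod_cast hp
  have hs0 : 0 < s := by linarith
  have hre : ∀ nm, 0 < (barnesForm p nm).re := fun nm => by rw [barnesForm_re]; positivity
  have hεn : ‖(ε : ℂ)‖ = 1 := by rcases hε with rfl | rfl <;> simp
  let F : (Fin p → ℕ) × (Fin p → ℕ) → ℝ → ℂ := fun nm x =>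
    (ε : ℂ) ^ (∑ j, nm.1 j + ∑ j, nm.2 j) *
      (((x ^ (s - 1) : ℝ) : ℂ) * Complex.exp (-(barnesForm p nm * x)))
  have hint : ∀ nm, Integrable (F nm) (volume.restrict (Set.Ioi 0)) := fun nm =>
    (integrable_gammaKernel (by linarith) (hre nm)).const_mul _
  have hnorm : Summable fun nm => ∫ x in Set.Ioi (0 : ℝ), ‖F nm x‖ := by
    refine ((summable_barnes_majorant p hp s hs).mul_right (Real.Gamma s)).congr fun nm => ?_
    have h : ∫ x in Set.Ioi (0 : ℝ), ‖F nm x‖ =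
        ∫ x in Set.Ioi (0 : ℝ), x ^ (s - 1) * Real.exp (-((barnesForm p nm).re * x)) :=
      setIntegral_congr_fun measurableSet_Ioi fun x hx => by
        simp only [F]
        rw [norm_mul, norm_gammaKernel _ _ hx, norm_pow, hεn, one_pow, one_mul]
    rw [h, Real.integral_rpow_mul_exp_neg_mul_Ioi hs0 (hre nm), one_div,
      Real.inv_rpow (hre nm).le, ← Real.rpow_neg (hre nm).le, barnesForm_re]
  have hmain := (hasSum_integral_of_summable_integral_norm hint hnorm).tsum_eq
  have hL : ∫ x in Set.Ioi (0 : ℝ), ∑' nm, F nm x = ((2 : ℂ) ^ p)⁻¹ *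
      ((∫ x in Set.Ioi (0 : ℝ), x ^ (s - 1) / (Real.cosh x - ε * Real.cos x) ^ p : ℝ) : ℂ) := by
    rw [← integral_complex_ofReal, ← integral_const_mul]
    refine setIntegral_congr_fun measurableSet_Ioi fun x hx => ?_
    have h := (integrand_expansion p hε hx).mul_left (((x ^ (s - 1) : ℝ) : ℂ))
    have h' : ∑' nm, F nm x = _ :=
      (h.congr_fun (g := fun nm => F nm x) fun nm => by simp only [F]; ring).tsum_eq
    simp only [h']
    push_cast
    ring
  have hterm : ∀ nm, ∫ x in Set.Ioi (0 : ℝ), F nm x = Complex.Gamma s *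
      ((ε : ℂ) ^ (∑ j, nm.1 j + ∑ j, nm.2 j) * barnesForm p nm ^ (-(s : ℂ))) := fun nm => by
    simp only [F]
    rw [integral_const_mul, integral_gammaKernel hs0 (hre nm)]
    ring
  rw [hL] at hmain
  simp_rw [hterm] at hmain
  rw [tsum_mul_left] at hmain
  rw [mul_assoc, hmain, mul_inv_cancel_left₀ (pow_ne_zero _ two_ne_zero)]

theorem berndt_integral_eval (p : ℕ) (hp : 1 ≤ p) (s : ℝ) (hs : 2 * (p : ℝ) < s) :
    ((∫ x in Set.Ioi (0 : ℝ), x ^ (s - 1) / (Real.cosh x - Real.cos x) ^ p : ℝ) =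
        (2 : ℂ) ^ p * Complex.Gamma s * barnesZetaRep p s) ∧
    ((∫ x in Set.Ioi (0 : ℝ), x ^ (s - 1) / (Real.cosh x + Real.cos x) ^ p : ℝ) =
        (2 : ℂ) ^ p * Complex.Gamma s * barnesZetaRepAlt p s) := by
  constructor
  · simpa [barnesZetaRep, barnesForm] using berndt_signed p hp s hs (ε := 1) (Or.inl rfl)
  · simpa [barnesZetaRepAlt, barnesForm] using berndt_signed p hp s hs (ε := -1) (Or.inr rfl)
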